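/- For every n ≥ 1 the generation distribution functions satisfy the recurrences: 2·F_{n+1}(x) = F_n(x−1) + 1 for all x ≥ 1, and 2·F_{n+1}(x) = F_n(x/(1−x)) for all 0 < x < 1. -/

import Mathlib

open Filter

/-- The generations of the Calkin–Wilf tree: `CW 0 = [1/1]` is the first
generation, and each generation is obtained from the previous one by replacing
each entry `x` by `x/(x+1)` and `x+1`, in this order.  Thus the `n`-th
generation of the paper is `CW (n-1)`. -/
def CW : ℕ → List ℚ
  | 0 => [1]
  | n + 1 => (CW n).flatMap (fun x => [x / (x + 1), x + 1])

open scoped Classical in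
/-- `Fcw n` is the distribution function of the `(n+1)`-st generation of the
Calkin–Wilf tree: `Fcw (n-1) x = F_n(x) = 2^(1-n) · #{j : x_j^(n) ≤ x}`. -/
noncomputable def Fcw (n : ℕ) (x : ℝ) : ℝ :=
  ((CW n).countP (fun q => decide ((q : ℝ) ≤ x))) / 2 ^ n

/-!
The children of a positive rational `q` are `q / (q + 1) < 1` and `q + 1 > 1`. If `1 ≤ x`, every
left child is at most `x`, and `q + 1 ≤ x` says `q ≤ x - 1`. If `x < 1`, no right child is at most
`x`, and `q / (q + 1) ≤ x` says `q ≤ x / (1 - x)`.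
-/

theorem div_add_one_le_iff_le_div_one_sub {K : Type*} [Field K] [LinearOrder K]
    [IsStrictOrderedRing K] {a x : K} (ha : -1 < a) (hx : x < 1) :
    a / (a + 1) ≤ x ↔ a ≤ x / (1 - x) := by
  rw [div_le_iff₀ (by linarith), le_div_iff₀ (by linarith)]
  constructor <;> intro h <;> linarith

theorem countP_flatMap_pair {α β : Type*} (p : β → Bool) (f g : α → β) (l : List α) :
    (l.flatMap fun a => [f a, g a]).countP p =
      (l.countP fun a => p (f a)) + l.countP fun a => p (g a) := by
  induction l with
  | nil => rfl
  | cons a l ih =>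
    simp only [List.flatMap_cons, List.countP_append, ih, List.countP_cons, List.countP_nil]
    omega

theorem CW_pos {n : ℕ} {q : ℚ} (hq : q ∈ CW n) : 0 < q := by
  induction n generalizing q with
  | zero => simp_all [CW]
  | succ n ih =>
    obtain ⟨a, ha, hqa⟩ := List.mem_flatMap.mp hq
    have ha_pos : 0 < a := ih ha
    obtain rfl | rfl : q = a / (a + 1) ∨ q = a + 1 := by simpa using hqa
    all_goals positivity

theorem length_CW (n : ℕ) : (CW n).length = 2 ^ n := by
  induction n with
  | zero => rfl
  | succ n ih => simp [CW, List.length_flatMap, ih, pow_succ]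

-- The coercion in `Fcw` is elaborated as a monadic lift of the whole list `CW n` to `List ℝ`.
theorem Fcw_eq_countP (n : ℕ) (x : ℝ) :
    Fcw n x = ((CW n).countP fun q : ℚ => (q : ℝ) ≤ x : ℕ) / 2 ^ n := by
  have lift_eq_map : (do let q ← CW n; pure (q : ℝ) : List ℝ) = (CW n).map (↑) :=
    List.map_eq_flatMap.symm
  rw [Fcw, lift_eq_map, List.countP_map]
  rfl

theorem Fcw_eq_zero_of_nonpos (n : ℕ) {x : ℝ} (hx : x ≤ 0) : Fcw n x = 0 := by
  have count_eq_zero : ((CW n).countP fun q : ℚ => (q : ℝ) ≤ x) = 0 := by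
    simp only [List.countP_eq_zero, decide_eq_true_eq, not_le]
    exact fun q hq => hx.trans_lt (Rat.cast_pos.mpr (CW_pos hq))
  rw [Fcw_eq_countP, count_eq_zero, Nat.cast_zero, zero_div]

theorem two_mul_Fcw_succ_eq_countP_add (n : ℕ) (x : ℝ) :
    2 * Fcw (n + 1) x =
      ((CW n).countP fun q : ℚ => (q / (q + 1) : ℝ) ≤ x : ℕ) / 2 ^ n + Fcw n (x - 1) := by
  simp only [Fcw_eq_countP, CW, countP_flatMap_pair, Rat.cast_div, Rat.cast_add, Rat.cast_one,
    Nat.cast_add, le_sub_iff_add_le]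
  field_simp
  ring

theorem countP_div_add_one_le_of_one_le (n : ℕ) {x : ℝ} (hx : 1 ≤ x) :
    ((CW n).countP fun q : ℚ => (q / (q + 1) : ℝ) ≤ x) = 2 ^ n := by
  rw [← length_CW, List.countP_eq_length]
  intro q hq
  have hq_pos : (0 : ℝ) < q := Rat.cast_pos.mpr (CW_pos hq)
  have child_le_one : (q / (q + 1) : ℝ) ≤ 1 := div_le_one_of_le₀ (by linarith) (by linarith)
  exact decide_eq_true (child_le_one.trans hx)

theorem countP_div_add_one_le_of_lt_one (n : ℕ) {x : ℝ} (hx : x < 1) :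
    ((CW n).countP fun q : ℚ => (q / (q + 1) : ℝ) ≤ x) =
      (CW n).countP fun q : ℚ => (q : ℝ) ≤ x / (1 - x) := by
  refine List.countP_congr fun q hq => ?_
  have hq_pos : (0 : ℝ) < q := Rat.cast_pos.mpr (CW_pos hq)
  simp only [decide_eq_true_eq, div_add_one_le_iff_le_div_one_sub (by linarith : (-1 : ℝ) < q) hx]

/-- The distribution functions of successive generations of the Calkin–Wilf
tree satisfy `2·F_{n+1}(x) = F_n(x−1) + 1` for `x ≥ 1` and
`2·F_{n+1}(x) = F_n(x/(1−x))` for `0 < x < 1` (here `F_n = Fcw (n-1)`, so the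
recurrence relates `Fcw n` to `Fcw (n-1)` for all `n ≥ 1`). -/
theorem calkin_wilf_distribution_recurrence (n : ℕ) :
    (∀ x : ℝ, 1 ≤ x → 2 * Fcw (n + 1) x = Fcw n (x - 1) + 1) ∧
    (∀ x : ℝ, 0 < x → x < 1 → 2 * Fcw (n + 1) x = Fcw n (x / (1 - x))) := by
  refine ⟨fun x hx => ?_, fun x _ hx => ?_⟩
  · rw [two_mul_Fcw_succ_eq_countP_add, countP_div_add_one_le_of_one_le n hx,
      Nat.cast_pow, Nat.cast_ofNat, div_self (by positivity), add_comm]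
  · rw [two_mul_Fcw_succ_eq_countP_add, countP_div_add_one_le_of_lt_one n hx, ← Fcw_eq_countP,
      Fcw_eq_zero_of_nonpos n (sub_nonpos.mpr hx.le), add_zero]
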